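/- arXiv:2305.19079 — 6 statements merged into one kernel-verified Lean document; each statement's English description precedes it below -/
import Mathlib

section
/- Let x and y be jointly distributed random vectors (the signal in ℝ^n and the measurement in ℝ^m), let e be a random vector in ℝ^n with E‖e‖₂² < ∞, and set y' = x + e. Let {f_θ : θ ∈ Θ} be a family of measurable maps f_θ : ℝ^m → ℝ^n with E‖f_θ(y)‖₂² < ∞ for all θ, and suppose that E[(f_θ(y) − x)ᵀ e] = 0 for all θ ∈ Θ. Then a parameter θ* ∈ Θ minimizes the self-supervised risk θ ↦ E‖f_θ(y) − y'‖₂² over Θ if and only if it minimizes the supervised risk θ ↦ E‖f_θ(y) − x‖₂² over Θ. -/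
open MeasureTheory ProbabilityTheory RealInnerProductSpace

/-- Noise2noise: under the orthogonality condition
`E[(f_θ(y) - x)ᵀ e] = 0` for all `θ`, a parameter `θ*` minimizes the
self-supervised risk `θ ↦ E‖f_θ(y) - y'‖₂²` (with `y' = x + e`) over `Θ`
if and only if it minimizes the supervised risk `θ ↦ E‖f_θ(y) - x‖₂²` over `Θ`. -/
theorem stmt0 (n m : ℕ) {Ω : Type*} [MeasurableSpace Ω]
    (μ : Measure Ω) [IsProbabilityMeasure μ]
    (x e : Ω → EuclideanSpace ℝ (Fin n)) (y : Ω → EuclideanSpace ℝ (Fin m))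
    (hx : Measurable x) (hy : Measurable y) (he : Measurable e)
    (hx2 : Integrable (fun ω => ‖x ω‖ ^ 2) μ)
    (he2 : Integrable (fun ω => ‖e ω‖ ^ 2) μ)
    {Θ : Type*} (f : Θ → EuclideanSpace ℝ (Fin m) → EuclideanSpace ℝ (Fin n))
    (hfmeas : ∀ θ, Measurable (f θ))
    (hf2 : ∀ θ, Integrable (fun ω => ‖f θ (y ω)‖ ^ 2) μ)
    (horth : ∀ θ, ∫ ω, ⟪f θ (y ω) - x ω, e ω⟫ ∂μ = 0)
    (θstar : Θ) :
    (∀ θ, ∫ ω, ‖f θstar (y ω) - (x ω + e ω)‖ ^ 2 ∂μ ≤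
        ∫ ω, ‖f θ (y ω) - (x ω + e ω)‖ ^ 2 ∂μ)
    ↔
    (∀ θ, ∫ ω, ‖f θstar (y ω) - x ω‖ ^ 2 ∂μ ≤
        ∫ ω, ‖f θ (y ω) - x ω‖ ^ 2 ∂μ) := by
  have hxL : MemLp x 2 μ := (memLp_two_iff_integrable_sq_norm hx.aestronglyMeasurable).2 hx2
  have heL : MemLp e 2 μ := (memLp_two_iff_integrable_sq_norm he.aestronglyMeasurable).2 he2
  have key : ∀ θ, ∫ ω, ‖f θ (y ω) - (x ω + e ω)‖ ^ 2 ∂μ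
      = ∫ ω, ‖f θ (y ω) - x ω‖ ^ 2 ∂μ + ∫ ω, ‖e ω‖ ^ 2 ∂μ := by
    intro θ
    have hfL : MemLp (fun ω => f θ (y ω)) 2 μ :=
      (memLp_two_iff_integrable_sq_norm
        ((hfmeas θ).comp hy).aestronglyMeasurable).2 (hf2 θ)
    have hd : MemLp (fun ω => f θ (y ω) - x ω) 2 μ := hfL.sub hxL
    have hd2 : Integrable (fun ω => ‖f θ (y ω) - x ω‖ ^ 2) μ :=
      (memLp_two_iff_integrable_sq_norm hd.1).1 hd
    have hin : Integrable (fun ω => ⟪f θ (y ω) - x ω, e ω⟫) μ := by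
      refine (hd2.add he2).mono' (hd.1.inner heL.1) (Filter.Eventually.of_forall fun ω => ?_)
      have h1 := norm_inner_le_norm (𝕜 := ℝ) (f θ (y ω) - x ω) (e ω)
      simp only [Pi.add_apply]
      nlinarith [sq_nonneg (‖f θ (y ω) - x ω‖ - ‖e ω‖),
        sq_nonneg (‖f θ (y ω) - x ω‖), sq_nonneg ‖e ω‖]
    have hpt : ∀ ω, ‖f θ (y ω) - (x ω + e ω)‖ ^ 2
        = (‖f θ (y ω) - x ω‖ ^ 2 - 2 * ⟪f θ (y ω) - x ω, e ω⟫) + ‖e ω‖ ^ 2 := by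
      intro ω
      rw [← sub_sub, norm_sub_sq_real]
    have hsub : Integrable
        (fun ω => ‖f θ (y ω) - x ω‖ ^ 2 - 2 * ⟪f θ (y ω) - x ω, e ω⟫) μ :=
      hd2.sub (hin.const_mul 2)
    simp_rw [hpt]
    rw [integral_add hsub he2, integral_sub hd2 (hin.const_mul 2),
      integral_const_mul, horth θ]
    ring
  simp only [key, add_le_add_iff_right]
end

section
/- Let x ∈ ℂ^n and y ∈ ℂ^m be jointly distributed random vectors with E‖x‖₂² < ∞, let F ∈ ℂ^{n×n} be a unitary matrix, and let M' = diag(m₁, …, m_n) be a random diagonal matrix, independent of (x, y), whose diagonal entries take values in {0, 1} with p_j = P(m_j = 1) > 0 for every j. Set W = diag(p₁^{−1/2}, …, p_n^{−1/2}) = (E[M'])^{−1/2} and y' = M' F x. Then for every measurable map f : ℂ^m → ℂ^n with E‖f(y)‖₂² < ∞, the self-supervised risk E‖W(M' F f(y) − y')‖₂² equals the supervised risk E‖f(y) − x‖₂²; in particular, for any family {f_θ : θ ∈ Θ}, a parameter θ minimizes the self-supervised risk over Θ if and only if it minimizes the supervised risk over Θ. -/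
open MeasureTheory ProbabilityTheory Matrix

/-- Supervised risk `E‖f(y) - x‖₂²` for complex-valued signals. -/
noncomputable def supRiskCS (n m : ℕ) {Ω : Type*} [MeasurableSpace Ω] (μ : Measure Ω)
    (x : Ω → Fin n → ℂ) (y : Ω → Fin m → ℂ)
    (f : (Fin m → ℂ) → Fin n → ℂ) : ℝ :=
  ∫ ω, ∑ j, ‖f (y ω) j - x ω j‖ ^ 2 ∂μ

/-- Self-supervised risk `E‖W (M' F f(y) - y')‖₂²` where `y' = M' F x`,
`M' = diag(msk)` is the random 0/1 mask and `W = diag(p_j^{-1/2}) = (E[M'])^{-1/2}`. -/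
noncomputable def ssRiskCS (n m : ℕ) {Ω : Type*} [MeasurableSpace Ω] (μ : Measure Ω)
    (x : Ω → Fin n → ℂ) (y : Ω → Fin m → ℂ) (msk : Ω → Fin n → ℝ)
    (F : Matrix (Fin n) (Fin n) ℂ) (p : Fin n → ℝ)
    (f : (Fin m → ℂ) → Fin n → ℂ) : ℝ :=
  ∫ ω, ∑ j, ‖((Real.sqrt (p j) : ℂ))⁻¹ *
      ((msk ω j : ℂ) * F.mulVec (f (y ω)) j - (msk ω j : ℂ) * F.mulVec (x ω) j)‖ ^ 2 ∂μ

/-- A unitary matrix preserves the sum of squared norms. -/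
theorem unitary_sum_sq (n : ℕ) (F : Matrix (Fin n) (Fin n) ℂ)
    (hF : F ∈ Matrix.unitaryGroup (Fin n) ℂ) (d : Fin n → ℂ) :
    ∑ j, ‖F.mulVec d j‖ ^ 2 = ∑ j, ‖d j‖ ^ 2 := by
  have key : ∀ v : Fin n → ℂ, ((∑ j, ‖v j‖ ^ 2 : ℝ) : ℂ) = star v ⬝ᵥ v := by
    intro v
    simp only [dotProduct, Pi.star_apply]
    push_cast
    refine Finset.sum_congr rfl fun j _ => ?_
    rw [← Complex.conj_mul']
    rfl
  have h : star (F.mulVec d) ⬝ᵥ F.mulVec d = star d ⬝ᵥ d := by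
    rw [Matrix.star_mulVec, ← Matrix.dotProduct_mulVec, Matrix.mulVec_mulVec,
      ← Matrix.star_eq_conjTranspose, Matrix.mem_unitaryGroup_iff'.1 hF, Matrix.one_mulVec]
  rw [← key, ← key] at h
  exact_mod_cast h

/-- Self-supervised compressive sensing: with `F` unitary,
`M'` a random diagonal 0/1 mask independent of `(x, y)` selecting each entry with
probability `p j > 0`, `W = (E[M'])^{-1/2}` and `y' = M' F x`, the self-supervised
risk `E‖W(M' F f(y) - y')‖₂²` equals the supervised risk `E‖f(y) - x‖₂²` for every
measurable `f` with `E‖f(y)‖₂² < ∞`; in particular, for any family `{f_θ}`, a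
parameter minimizes the self-supervised risk iff it minimizes the supervised risk. -/
theorem stmt2 (n m : ℕ) {Ω : Type*} [MeasurableSpace Ω]
    (μ : Measure Ω) [IsProbabilityMeasure μ]
    (x : Ω → Fin n → ℂ) (y : Ω → Fin m → ℂ)
    (hxmeas : Measurable x) (hymeas : Measurable y)
    (hx2 : Integrable (fun ω => ∑ j, ‖x ω j‖ ^ 2) μ)
    (F : Matrix (Fin n) (Fin n) ℂ) (hF : F ∈ Matrix.unitaryGroup (Fin n) ℂ)
    (msk : Ω → Fin n → ℝ) (hmskmeas : Measurable msk)
    (h01 : ∀ ω j, msk ω j = 0 ∨ msk ω j = 1)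
    (hindep : IndepFun msk (fun ω => (x ω, y ω)) μ)
    (p : Fin n → ℝ) (hp : ∀ j, p j = (μ {ω | msk ω j = 1}).toReal)
    (hppos : ∀ j, 0 < p j)
    {Θ : Type*} (fam : Θ → (Fin m → ℂ) → Fin n → ℂ)
    (hfammeas : ∀ θ, Measurable (fam θ))
    (hfam2 : ∀ θ, Integrable (fun ω => ∑ j, ‖fam θ (y ω) j‖ ^ 2) μ) :
    (∀ f : (Fin m → ℂ) → Fin n → ℂ, Measurable f →
      Integrable (fun ω => ∑ j, ‖f (y ω) j‖ ^ 2) μ →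
      ssRiskCS n m μ x y msk F p f = supRiskCS n m μ x y f) ∧
    (∀ θstar : Θ,
      (∀ θ, ssRiskCS n m μ x y msk F p (fam θstar) ≤ ssRiskCS n m μ x y msk F p (fam θ)) ↔
      (∀ θ, supRiskCS n m μ x y (fam θstar) ≤ supRiskCS n m μ x y (fam θ))) := by
  have main : ∀ f : (Fin m → ℂ) → Fin n → ℂ, Measurable f →
      Integrable (fun ω => ∑ j, ‖f (y ω) j‖ ^ 2) μ →
      ssRiskCS n m μ x y msk F p f = supRiskCS n m μ x y f := by
    intro f hf hf2
    set φ : Fin n → ((Fin n → ℂ) × (Fin m → ℂ)) → ℝ :=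
      fun j z => ‖F.mulVec (f z.2 - z.1) j‖ ^ 2 with hφ
    have hφm : ∀ j, Measurable (φ j) := by
      intro j
      simp only [hφ, Matrix.mulVec, dotProduct, Pi.sub_apply]
      fun_prop
    have hxy : Measurable (fun ω => (x ω, y ω)) := hxmeas.prodMk hymeas
    have hgm : ∀ j, Measurable (fun ω => φ j (x ω, y ω)) := fun j => (hφm j).comp hxy
    have hsum : ∀ ω, ∑ j, φ j (x ω, y ω) = ∑ j, ‖f (y ω) j - x ω j‖ ^ 2 := fun ω =>
      unitary_sum_sq n F hF (f (y ω) - x ω)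
    have hgint : ∀ j, Integrable (fun ω => φ j (x ω, y ω)) μ := by
      intro j
      refine Integrable.mono' ((hf2.add hx2).const_mul 2) (hgm j).aestronglyMeasurable
        (Filter.Eventually.of_forall fun ω => ?_)
      have h0 : ∀ i, 0 ≤ φ i (x ω, y ω) := fun i => by positivity
      rw [Real.norm_of_nonneg (h0 j)]
      calc φ j (x ω, y ω) ≤ ∑ i, φ i (x ω, y ω) :=
            Finset.single_le_sum (f := fun i => φ i (x ω, y ω)) (fun i _ => h0 i) (Finset.mem_univ j)
        _ = ∑ j, ‖f (y ω) j - x ω j‖ ^ 2 := hsum ω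
        _ ≤ ∑ j, 2 * (‖f (y ω) j‖ ^ 2 + ‖x ω j‖ ^ 2) := by
            refine Finset.sum_le_sum fun i _ => ?_
            have := norm_sub_le (f (y ω) i) (x ω i)
            nlinarith [sq_nonneg (‖f (y ω) i‖ - ‖x ω i‖), norm_nonneg (f (y ω) i - x ω i)]
        _ = _ := by
            simp only [Pi.add_apply]
            rw [← Finset.mul_sum, Finset.sum_add_distrib]
    have hmm : ∀ j, Measurable (fun ω => msk ω j) := fun j => (measurable_pi_apply j).comp hmskmeas
    have hmE : ∀ j, ∫ ω, msk ω j ∂μ = p j := by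
      intro j
      have hs : MeasurableSet {ω | msk ω j = 1} := hmm j (measurableSet_singleton 1)
      have : (fun ω => msk ω j) = Set.indicator {ω | msk ω j = 1} 1 := by
        funext ω
        rcases h01 ω j with h | h <;> simp [Set.indicator, h]
      rw [this, integral_indicator_one hs, hp j]
      rfl
    have hprod : ∀ j, ∫ ω, msk ω j * φ j (x ω, y ω) ∂μ = p j * ∫ ω, φ j (x ω, y ω) ∂μ := by
      intro j
      have hi : IndepFun (fun ω => msk ω j) (fun ω => φ j (x ω, y ω)) μ :=
        hindep.comp (measurable_pi_apply j) (hφm j)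
      rw [← hmE j]
      exact hi.integral_fun_mul_eq_mul_integral (hmm j).aestronglyMeasurable
        (hgm j).aestronglyMeasurable
    have hpint : ∀ j, Integrable (fun ω => msk ω j * φ j (x ω, y ω)) μ := by
      intro j
      refine (hgint j).bdd_mul (c := 1) (hmm j).aestronglyMeasurable
        (Filter.Eventually.of_forall fun ω => ?_)
      rcases h01 ω j with h | h <;> simp [h]
    have hterm : ∀ ω j, ‖((Real.sqrt (p j) : ℂ))⁻¹ *
        ((msk ω j : ℂ) * F.mulVec (f (y ω)) j - (msk ω j : ℂ) * F.mulVec (x ω) j)‖ ^ 2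
        = (p j)⁻¹ * (msk ω j * φ j (x ω, y ω)) := by
      intro ω j
      have hm2 : ‖(msk ω j : ℂ)‖ ^ 2 = msk ω j := by
        rcases h01 ω j with h | h <;> simp [h]
      have hs2 : ‖((Real.sqrt (p j) : ℂ))⁻¹‖ ^ 2 = (p j)⁻¹ := by
        rw [norm_inv, Complex.norm_real, inv_pow, Real.norm_eq_abs, sq_abs,
          Real.sq_sqrt (hppos j).le]
      rw [← mul_sub, norm_mul, norm_mul, mul_pow, mul_pow, hm2, hs2]
      simp only [hφ, Matrix.mulVec_sub, Pi.sub_apply]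
    unfold ssRiskCS supRiskCS
    simp only [hterm, ← hsum]
    rw [integral_finsetSum _ fun j _ => (hpint j).const_mul _,
      integral_finsetSum _ fun j _ => hgint j]
    refine Finset.sum_congr rfl fun j _ => ?_
    rw [integral_const_mul, hprod j, inv_mul_cancel_left₀ (hppos j).ne']
  refine ⟨main, fun θs => ?_⟩
  have h : ∀ θ, ssRiskCS n m μ x y msk F p (fam θ) = supRiskCS n m μ x y (fam θ) :=
    fun θ => main _ (hfammeas θ) (hfam2 θ)
  simp only [h]
end

section
/- Consider the linear subspace denoising model. The matrix W* = (1/(1 + σ_z² d/n)) U Uᵀ minimizes the risk R over all W ∈ ℝ^{n×n}, i.e., R(W*) ≤ R(W) for all W ∈ ℝ^{n×n}, and the optimal risk equals R(W*) = (σ_z² d/n)/(1 + σ_z² d/n). -/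
open MeasureTheory ProbabilityTheory Matrix

/-- The risk `R(W) = E‖W y - x‖₂²` of the linear estimator `W` in the linear
subspace denoising model, where `x = U c` and `y = x + z`. -/
noncomputable def riskLin (n d : ℕ) {Ω : Type*} [MeasurableSpace Ω] (μ : Measure Ω)
    (U : Matrix (Fin n) (Fin d) ℝ) (c : Ω → Fin d → ℝ) (z : Ω → Fin n → ℝ)
    (W : Matrix (Fin n) (Fin n) ℝ) : ℝ :=
  ∫ ω, ∑ i, ((W.mulVec (U.mulVec (c ω) + z ω) - U.mulVec (c ω)) i) ^ 2 ∂μ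

lemma gauss_pi_lin (m : ℕ) (v : NNReal) (a : Fin m → ℝ) :
    MemLp (fun x : Fin m → ℝ => ∑ j, a j * x j) 2 (Measure.pi fun _ : Fin m => gaussianReal 0 v) ∧
    ∫ x, (∑ j, a j * x j) ∂(Measure.pi fun _ : Fin m => gaussianReal 0 v) = 0 ∧
    ∫ x, (∑ j, a j * x j) ^ 2 ∂(Measure.pi fun _ : Fin m => gaussianReal 0 v)
      = (v : ℝ) * ∑ j, a j ^ 2 := by
  set P := Measure.pi fun _ : Fin m => gaussianReal 0 v with hP
  have hmp : ∀ j, MeasurePreserving (fun x : Fin m → ℝ => x j) P (gaussianReal 0 v) :=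
    fun j => measurePreserving_eval (fun _ : Fin m => gaussianReal 0 v) j
  have h1 : ∀ j, MemLp (fun x : Fin m → ℝ => a j * x j) 2 P := fun j =>
    ((memLp_id_gaussianReal (μ := 0) (v := v) 2).comp_measurePreserving (hmp j)).const_mul (a j)
  have hm : MemLp (fun x : Fin m → ℝ => ∑ j, a j * x j) 2 P :=
    memLp_finsetSum _ fun j _ => h1 j
  have h0 : ∀ j, ∫ x, a j * x j ∂P = 0 := by
    intro j
    rw [integral_const_mul]
    have : ∫ x, x j ∂P = ∫ y, y ∂(gaussianReal 0 v) := by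
      rw [← (hmp j).map_eq, integral_map (hmp j).measurable.aemeasurable (by fun_prop)]
    rw [this]; simp
  have h00 : ∫ x, (∑ j, a j * x j) ∂P = 0 := by
    rw [integral_finsetSum _ fun j _ => (h1 j).integrable (by norm_num)]
    simp [h0]
  refine ⟨hm, h00, ?_⟩
  rw [← variance_of_integral_eq_zero hm.aestronglyMeasurable.aemeasurable h00]
  have := variance_sum_pi (μ := fun _ : Fin m => gaussianReal 0 v)
    (X := fun j (y : ℝ) => a j * y)
    (fun j => (memLp_id_gaussianReal (μ := 0) (v := v) 2).const_mul (a j))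
  have e : (fun x : Fin m → ℝ => ∑ j, a j * x j) = ∑ j, fun x : Fin m → ℝ => a j * x j := by
    ext x; simp
  rw [e, this, Finset.mul_sum]
  refine Finset.sum_congr rfl fun j _ => ?_
  rw [variance_const_mul]
  have := variance_id_gaussianReal (μ := 0) (v := v)
  rw [show (fun y : ℝ => y) = id from rfl, this]; ring

lemma prod_lin (d n : ℕ) (v w : NNReal) (a : Fin d → ℝ) (b : Fin n → ℝ) :
    Integrable (fun p : (Fin d → ℝ) × (Fin n → ℝ) => (∑ j, a j * p.1 j + ∑ k, b k * p.2 k) ^ 2)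
      ((Measure.pi fun _ : Fin d => gaussianReal 0 v).prod
        (Measure.pi fun _ : Fin n => gaussianReal 0 w)) ∧
    ∫ p, (∑ j, a j * p.1 j + ∑ k, b k * p.2 k) ^ 2
      ∂((Measure.pi fun _ : Fin d => gaussianReal 0 v).prod
        (Measure.pi fun _ : Fin n => gaussianReal 0 w))
      = (v : ℝ) * ∑ j, a j ^ 2 + (w : ℝ) * ∑ k, b k ^ 2 := by
  obtain ⟨ha, ha0, ha2⟩ := gauss_pi_lin d v a
  obtain ⟨hb, hb0, hb2⟩ := gauss_pi_lin n w b
  set P := Measure.pi fun _ : Fin d => gaussianReal 0 v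
  set Q := Measure.pi fun _ : Fin n => gaussianReal 0 w
  have ha' : MemLp (fun p : (Fin d → ℝ) × (Fin n → ℝ) => ∑ j, a j * p.1 j) 2 (P.prod Q) :=
    ha.comp_measurePreserving measurePreserving_fst
  have hb' : MemLp (fun p : (Fin d → ℝ) × (Fin n → ℝ) => ∑ k, b k * p.2 k) 2 (P.prod Q) :=
    hb.comp_measurePreserving measurePreserving_snd
  refine ⟨(ha'.add hb').integrable_sq, ?_⟩
  have hx : ∫ p : (Fin d → ℝ) × (Fin n → ℝ), (∑ j, a j * p.1 j) * (∑ k, b k * p.2 k) ∂(P.prod Q)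
      = 0 := by
    rw [integral_prod_mul (fun x : Fin d → ℝ => ∑ j, a j * x j)
      (fun x : Fin n → ℝ => ∑ j, b j * x j), ha0, zero_mul]
  have hA : ∫ p : (Fin d → ℝ) × (Fin n → ℝ), (∑ j, a j * p.1 j) ^ 2 ∂(P.prod Q)
      = (v : ℝ) * ∑ j, a j ^ 2 := by
    rw [integral_fun_fst (fun x : Fin d → ℝ => (∑ j, a j * x j) ^ 2), ha2]; simp
  have hB : ∫ p : (Fin d → ℝ) × (Fin n → ℝ), (∑ j, b j * p.2 j) ^ 2 ∂(P.prod Q)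
      = (w : ℝ) * ∑ j, b j ^ 2 := by
    rw [integral_fun_snd (fun x : Fin n → ℝ => (∑ j, b j * x j) ^ 2), hb2]; simp
  have hxi := ha'.integrable_mul hb'
  have e : ∀ p : (Fin d → ℝ) × (Fin n → ℝ), (∑ j, a j * p.1 j + ∑ k, b k * p.2 k) ^ 2
      = (∑ j, a j * p.1 j) ^ 2 + (2 * ((∑ j, a j * p.1 j) * (∑ k, b k * p.2 k))
        + (∑ k, b k * p.2 k) ^ 2) := fun p => by ring
  simp_rw [e]
  have hxi2 : Integrable (fun p : (Fin d → ℝ) × (Fin n → ℝ) =>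
      2 * ((∑ j, a j * p.1 j) * (∑ k, b k * p.2 k))) (P.prod Q) := hxi.const_mul 2
  have hsum : Integrable (fun p : (Fin d → ℝ) × (Fin n → ℝ) =>
      2 * ((∑ j, a j * p.1 j) * (∑ k, b k * p.2 k)) + (∑ k, b k * p.2 k) ^ 2) (P.prod Q) :=
    hxi2.add hb'.integrable_sq
  rw [integral_add ha'.integrable_sq hsum,
    integral_add hxi2 hb'.integrable_sq, integral_const_mul, hx, hA, hB]
  ring

lemma risk_formula (n d : ℕ) {Ω : Type*} [MeasurableSpace Ω] (μ : Measure Ω)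
    (v w : NNReal)
    (U : Matrix (Fin n) (Fin d) ℝ)
    (c : Ω → Fin d → ℝ) (z : Ω → Fin n → ℝ)
    (hc : Measurable c) (hz : Measurable z)
    (hlaw : Measure.map (fun ω => (c ω, z ω)) μ =
      (Measure.pi fun _ : Fin d => gaussianReal 0 v).prod
        (Measure.pi fun _ : Fin n => gaussianReal 0 w))
    (W : Matrix (Fin n) (Fin n) ℝ) :
    riskLin n d μ U c z W =
      v * ((W * U - U) * (W * U - U)ᵀ).trace + w * (W * Wᵀ).trace := by
  have e : ∀ ω, ∑ i, ((W.mulVec (U.mulVec (c ω) + z ω) - U.mulVec (c ω)) i) ^ 2 =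
      (fun p : (Fin d → ℝ) × (Fin n → ℝ) =>
        ∑ i, (∑ j, (W * U - U) i j * p.1 j + ∑ k, W i k * p.2 k) ^ 2) (c ω, z ω) := by
    intro ω
    refine Finset.sum_congr rfl fun i _ => ?_
    have : W.mulVec (U.mulVec (c ω) + z ω) - U.mulVec (c ω)
        = (W * U - U).mulVec (c ω) + W.mulVec (z ω) := by
      rw [Matrix.mulVec_add, Matrix.sub_mulVec, Matrix.mulVec_mulVec]; abel
    rw [this]; rfl
  unfold riskLin
  simp_rw [e]
  rw [← integral_map (φ := fun ω => (c ω, z ω))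
    (f := fun p : (Fin d → ℝ) × (Fin n → ℝ) =>
        ∑ i, (∑ j, (W * U - U) i j * p.1 j + ∑ k, W i k * p.2 k) ^ 2)
    (hc.prodMk hz).aemeasurable (by fun_prop), hlaw,
    integral_finsetSum _ fun i _ => (prod_lin d n v w (fun j => (W * U - U) i j) (fun k => W i k)).1]
  rw [Finset.sum_congr rfl fun i _ =>
    (prod_lin d n v w (fun j => (W * U - U) i j) (fun k => W i k)).2]
  rw [Finset.sum_add_distrib, ← Finset.mul_sum, ← Finset.mul_sum]
  generalize W * U - U = A
  simp [Matrix.trace, Matrix.mul_apply, Matrix.transpose_apply, sq]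

lemma trace_self_nonneg {m k : ℕ} (A : Matrix (Fin m) (Fin k) ℝ) : 0 ≤ (A * Aᵀ).trace := by
  simp only [Matrix.trace, Matrix.diag, Matrix.mul_apply, Matrix.transpose_apply]
  exact Finset.sum_nonneg fun i _ => Finset.sum_nonneg fun j _ => mul_self_nonneg _

/-- In the linear subspace denoising model, the matrix
`W* = (1/(1 + σ_z² d/n)) U Uᵀ` minimizes the risk `R` over all `W ∈ ℝ^{n×n}`,
and the optimal risk equals `R(W*) = (σ_z² d/n)/(1 + σ_z² d/n)`. -/
theorem stmt8 (n d : ℕ) (hd : 1 ≤ d) (hdn : d ≤ n)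
    {Ω : Type*} [MeasurableSpace Ω] (μ : Measure Ω) [IsProbabilityMeasure μ]
    (σz σe : ℝ) (hσz : 0 ≤ σz) (hσe : 0 ≤ σe)
    (U : Matrix (Fin n) (Fin d) ℝ) (hU : Uᵀ * U = 1)
    (c : Ω → Fin d → ℝ) (z : Ω → Fin n → ℝ)
    (hc : Measurable c) (hz : Measurable z)
    (hlaw : Measure.map (fun ω => (c ω, z ω)) μ =
      (Measure.pi fun _ : Fin d => gaussianReal 0 ((1 / (d : ℝ)).toNNReal)).prod
        (Measure.pi fun _ : Fin n => gaussianReal 0 ((σz ^ 2 / (n : ℝ)).toNNReal)))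
    (Wstar : Matrix (Fin n) (Fin n) ℝ)
    (hWstar : Wstar = (1 / (1 + σz ^ 2 * d / n)) • (U * Uᵀ)) :
    (∀ W : Matrix (Fin n) (Fin n) ℝ,
        riskLin n d μ U c z Wstar ≤ riskLin n d μ U c z W) ∧
      riskLin n d μ U c z Wstar = (σz ^ 2 * d / n) / (1 + σz ^ 2 * d / n) := by
  have hd0 : (0 : ℝ) < d := by exact_mod_cast hd
  have hn0 : (0 : ℝ) < n := by exact_mod_cast (lt_of_lt_of_le hd hdn)
  have hR := risk_formula n d μ _ _ U c z hc hz hlaw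
  rw [Real.coe_toNNReal _ (by positivity), Real.coe_toNNReal _ (by positivity)] at hR
  have hβ : 0 ≤ σz ^ 2 / (n : ℝ) := by positivity
  have hα : 0 ≤ 1 / (d : ℝ) := by positivity
  set s : ℝ := 1 / (1 + σz ^ 2 * d / n) with hs
  have hpos : 0 < 1 + σz ^ 2 * d / n := by positivity
  have hstat : 1 / (d : ℝ) * (s - 1) + σz ^ 2 / n * s = 0 := by
    rw [hs]; field_simp; ring
  have htr : (U * Uᵀ).trace = d := by
    rw [Matrix.trace_mul_comm, hU]; simp
  have hWU : Wstar * U = s • U := by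
    rw [hWstar, Matrix.smul_mul, Matrix.mul_assoc, hU, Matrix.mul_one]
  have hWU' : Wstar * U - U = (s - 1) • U := by rw [hWU, sub_smul, one_smul]
  have hP : (U * Uᵀ) * (U * Uᵀ) = U * Uᵀ := by
    rw [Matrix.mul_assoc, ← Matrix.mul_assoc Uᵀ, hU, Matrix.one_mul]
  have hWW : (Wstar * Wstarᵀ).trace = s * s * d := by
    rw [hWstar]
    simp only [Matrix.transpose_smul, Matrix.transpose_mul, Matrix.transpose_transpose,
      Matrix.smul_mul, Matrix.mul_smul, hP, Matrix.trace_smul, htr, smul_eq_mul]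
    ring
  have hval : riskLin n d μ U c z Wstar = (1 / (d : ℝ)) * ((s - 1) * (s - 1) * d)
      + σz ^ 2 / n * (s * s * d) := by
    rw [hR, hWU', hWW]
    simp only [Matrix.transpose_smul, Matrix.smul_mul, Matrix.mul_smul, Matrix.trace_smul, htr,
      smul_eq_mul]
    ring
  constructor
  · intro W
    obtain ⟨H, rfl⟩ : ∃ H, W = Wstar + H := ⟨W - Wstar, by abel⟩
    have e1 : (Wstar + H) * U - U = (s - 1) • U + H * U := by
      rw [Matrix.add_mul, ← hWU']; abel
    have t1 : (U * (Uᵀ * Hᵀ)).trace = (H * (U * Uᵀ)).trace := by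
      rw [← Matrix.trace_transpose]
      simp [Matrix.transpose_mul, Matrix.mul_assoc]
    have e2 : (((Wstar + H) * U - U) * ((Wstar + H) * U - U)ᵀ).trace
        = (s - 1) * (s - 1) * d + 2 * (s - 1) * (H * (U * Uᵀ)).trace
          + ((H * U) * (H * U)ᵀ).trace := by
      rw [e1]
      simp only [Matrix.transpose_add, Matrix.transpose_smul, Matrix.add_mul, Matrix.mul_add,
        Matrix.smul_mul, Matrix.mul_smul, Matrix.trace_add, Matrix.trace_smul, htr, smul_eq_mul]
      rw [Matrix.transpose_mul, t1, Matrix.mul_assoc H U Uᵀ]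
      ring
    have e3 : ((Wstar + H) * (Wstar + H)ᵀ).trace
        = s * s * d + 2 * s * (H * (U * Uᵀ)).trace + (H * Hᵀ).trace := by
      rw [Matrix.transpose_add, Matrix.add_mul, Matrix.mul_add, Matrix.mul_add]
      simp only [Matrix.trace_add, hWW]
      rw [hWstar]
      simp only [Matrix.transpose_smul, Matrix.transpose_mul, Matrix.transpose_transpose,
        Matrix.smul_mul, Matrix.mul_smul, Matrix.trace_smul, smul_eq_mul]
      rw [Matrix.mul_assoc U, t1]
      ring
    rw [hval, hR, e2, e3]
    have p1 := mul_nonneg hα (trace_self_nonneg (H * U))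
    have p2 := mul_nonneg hβ (trace_self_nonneg H)
    have p3 : 2 * (H * (U * Uᵀ)).trace * (1 / (d : ℝ) * (s - 1) + σz ^ 2 / n * s) = 0 := by
      rw [hstat, mul_zero]
    linarith
  · rw [hval, hs]
    field_simp
    ring
end

section
/- Let d ≥ 2 and n ≥ d be integers, let U ∈ ℝ^{n×d} have orthonormal columns, let c ~ N(0, (1/d) I_d) and x = U c, and let A ∈ ℝ^{n×n} be an arbitrary matrix. Then E‖A x xᵀ‖_F² ≤ (2/d) ‖A U‖_F². -/
open MeasureTheory ProbabilityTheory Matrix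

lemma gauss_moments (v : NNReal) :
    (∫ x, x ^ 2 ∂(gaussianReal 0 v) = v) ∧ (∫ x, x ^ 3 ∂(gaussianReal 0 v) = 0) ∧
    (∫ x, x ^ 4 ∂(gaussianReal 0 v) = 3 * (v : ℝ) ^ 2) := by
  have h0 : (0 : ℝ) ∈ interior (integrableExpSet id (gaussianReal 0 v)) := by
    simp
  have hm : mgf id (gaussianReal 0 v) = fun t => Real.exp ((v : ℝ) * t ^ 2 / 2) := by
    rw [mgf_id_gaussianReal]; simp
  have hE : ∀ t : ℝ, HasDerivAt (fun t : ℝ => Real.exp ((v : ℝ) * t ^ 2 / 2))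
      (Real.exp ((v : ℝ) * t ^ 2 / 2) * ((v : ℝ) * t)) t := by
    intro t
    have := ((((hasDerivAt_id t).pow 2).const_mul (v : ℝ)).div_const 2).exp
    convert! this using 1
    simp; ring
  have d1 : deriv (fun t : ℝ => Real.exp ((v : ℝ) * t ^ 2 / 2)) =
      fun t => ((v : ℝ) * t) * Real.exp ((v : ℝ) * t ^ 2 / 2) := by
    funext t; rw [(hE t).deriv]; ring
  have d2 : deriv (fun t : ℝ => ((v : ℝ) * t) * Real.exp ((v : ℝ) * t ^ 2 / 2)) =
      fun t => ((v : ℝ) + v ^ 2 * t ^ 2) * Real.exp ((v : ℝ) * t ^ 2 / 2) := by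
    funext t
    rw [(((hasDerivAt_id' t).const_mul (v : ℝ)).fun_mul (hE t)).deriv]; ring
  have d3 : deriv (fun t : ℝ => ((v : ℝ) + v ^ 2 * t ^ 2) * Real.exp ((v : ℝ) * t ^ 2 / 2)) =
      fun t => (3 * (v : ℝ) ^ 2 * t + v ^ 3 * t ^ 3) * Real.exp ((v : ℝ) * t ^ 2 / 2) := by
    funext t
    rw [(((((hasDerivAt_id' t).fun_pow 2).const_mul ((v : ℝ) ^ 2)).const_add (v : ℝ)).fun_mul
      (hE t)).deriv]
    simp; ring
  have d4 : deriv (fun t : ℝ =>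
        (3 * (v : ℝ) ^ 2 * t + v ^ 3 * t ^ 3) * Real.exp ((v : ℝ) * t ^ 2 / 2)) =
      fun t => (3 * (v : ℝ) ^ 2 + 6 * v ^ 3 * t ^ 2 + v ^ 4 * t ^ 4) *
        Real.exp ((v : ℝ) * t ^ 2 / 2) := by
    funext t
    rw [((((hasDerivAt_id' t).const_mul (3 * (v : ℝ) ^ 2)).fun_add
      (((hasDerivAt_id' t).fun_pow 3).const_mul ((v : ℝ) ^ 3))).fun_mul (hE t)).deriv]
    simp; ring
  have k2 := iteratedDeriv_mgf_zero h0 2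
  have k3 := iteratedDeriv_mgf_zero h0 3
  have k4 := iteratedDeriv_mgf_zero h0 4
  simp only [hm, iteratedDeriv_succ, iteratedDeriv_zero, d1, d2, d3, d4] at k2 k3 k4
  simp at k2 k3 k4
  exact ⟨k2.symm, k3.symm, k4.symm⟩

lemma gauss_int_pow (v : NNReal) (k : ℕ) : Integrable (fun x : ℝ => x ^ k) (gaussianReal 0 v) := by
  have := (memLp_id_gaussianReal (μ := 0) (v := v) (k : NNReal)).integrable_norm_pow' 
  refine (integrable_norm_iff (by fun_prop)).1 ?_
  simpa using this

/-- the monomial as a product -/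
lemma mono_prod {d : ℕ} (x : Fin d → ℝ) (j k l : Fin d) :
    x j * x k * x l ^ 2 = ∏ m, x m ^ ((if m = j then 1 else 0) + (if m = k then 1 else 0)
      + (if m = l then 2 else 0)) := by
  simp only [pow_add, Finset.prod_mul_distrib, pow_ite]
  simp

lemma mono_integrable {d : ℕ} (v : NNReal) (j k l : Fin d) :
    Integrable (fun x : Fin d → ℝ => x j * x k * x l ^ 2)
      (Measure.pi fun _ : Fin d => gaussianReal 0 v) := by
  simp_rw [mono_prod]
  exact Integrable.fintype_prod (f := fun (m : Fin d) (t : ℝ) =>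
    t ^ ((if m = j then 1 else 0) + (if m = k then 1 else 0) + (if m = l then 2 else 0)))
    (fun i => gauss_int_pow v _)

lemma mono_integral {d : ℕ} (v : NNReal) (j k l : Fin d) :
    ∫ x : Fin d → ℝ, x j * x k * x l ^ 2 ∂(Measure.pi fun _ : Fin d => gaussianReal 0 v)
      = if j = k then (v : ℝ) ^ 2 + (if j = l then 2 * (v : ℝ) ^ 2 else 0) else 0 := by
  obtain ⟨m2, m3, m4⟩ := gauss_moments v
  have m1 : ∫ x, x ∂(gaussianReal 0 v) = 0 := integral_id_gaussianReal
  simp_rw [mono_prod]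
  rw [integral_fintype_prod_eq_prod (f := fun (m : Fin d) (t : ℝ) =>
    t ^ ((if m = j then 1 else 0) + (if m = k then 1 else 0) + (if m = l then 2 else 0)))]
  by_cases hjk : j = k
  · subst hjk
    by_cases hjl : j = l
    · subst hjl
      rw [Finset.prod_eq_single j]
      · simp [m4]; ring
      · intro b _ hb; simp [hb]
      · simp
    · rw [Finset.prod_eq_mul j l hjl]
      · simp [hjl, Ne.symm hjl, pow_two]
        simpa [pow_two] using congrArg₂ (· * ·) m2 m2
      · intro b _ hb; simp [hb.1, hb.2]
      · simp
      · simp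
  · rw [if_neg hjk]
    apply Finset.prod_eq_zero (Finset.mem_univ j)
    by_cases hjl : j = l
    · subst hjl; simp [hjk, m3]
    · simp [hjk, hjl, m1]

theorem stmt13 (n d : ℕ) (hd : 2 ≤ d) (hdn : d ≤ n)
    {Ω : Type*} [MeasurableSpace Ω] (μ : Measure Ω) [IsProbabilityMeasure μ]
    (U : Matrix (Fin n) (Fin d) ℝ) (hU : Uᵀ * U = 1)
    (c : Ω → Fin d → ℝ) (hc : Measurable c)
    (hlaw : Measure.map c μ =
      Measure.pi fun _ : Fin d => gaussianReal 0 ((1 / (d : ℝ)).toNNReal))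
    (A : Matrix (Fin n) (Fin n) ℝ) :
    ∫ ω, ∑ i, ∑ j, ((A.mulVec (U.mulVec (c ω)) i) * (U.mulVec (c ω) j)) ^ 2 ∂μ ≤
      (2 / (d : ℝ)) * ∑ i, ∑ j, ((A * U) i j) ^ 2 := by
  have hd' : (2 : ℝ) ≤ d := by exact_mod_cast hd
  set v : NNReal := (1 / (d : ℝ)).toNNReal with hv
  have hvr : (v : ℝ) = 1 / d := by
    rw [hv, Real.coe_toNNReal]; positivity
  set B := A * U with hB
  have hnorm : ∀ x : Fin d → ℝ, ∑ j, (U.mulVec x j) ^ 2 = ∑ l, x l ^ 2 := by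
    intro x
    have : (U *ᵥ x) ⬝ᵥ (U *ᵥ x) = x ⬝ᵥ x := by
      rw [Matrix.dotProduct_mulVec, Matrix.vecMul_mulVec, ← Matrix.dotProduct_mulVec, hU,
        Matrix.one_mulVec]
    simpa [dotProduct, pow_two] using this
  have hpt : ∀ x : Fin d → ℝ,
      ∑ i, ∑ j, ((A.mulVec (U.mulVec x) i) * (U.mulVec x j)) ^ 2 =
      ∑ i, ∑ j, ∑ k, ∑ l, (B i j * B i k) * (x j * x k * x l ^ 2) := by
    intro x
    refine Finset.sum_congr rfl fun i _ => ?_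
    simp_rw [mul_pow, ← Finset.mul_sum, hnorm, Matrix.mulVec_mulVec, ← hB]
    rw [pow_two]
    simp only [mulVec, dotProduct]
    rw [Finset.sum_mul_sum, Finset.sum_mul]
    refine Finset.sum_congr rfl fun j _ => ?_
    rw [Finset.sum_mul]
    refine Finset.sum_congr rfl fun k _ => ?_
    ring
  have hmap := integral_map (μ := μ) hc.aemeasurable (f := fun x : Fin d → ℝ =>
      ∑ i, ∑ j, ∑ k, ∑ l, (B i j * B i k) * (x j * x k * x l ^ 2))
      (by apply Continuous.aestronglyMeasurable; fun_prop)
  simp_rw [hpt]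
  rw [← hmap, hlaw]
  have hint : ∀ i j k l, Integrable (fun x : Fin d → ℝ => (B i j * B i k) * (x j * x k * x l ^ 2))
      (Measure.pi fun _ : Fin d => gaussianReal 0 v) :=
    fun i j k l => (mono_integrable v j k l).const_mul _
  have key : ∫ x : Fin d → ℝ, ∑ i, ∑ j, ∑ k, ∑ l, (B i j * B i k) * (x j * x k * x l ^ 2)
      ∂(Measure.pi fun _ : Fin d => gaussianReal 0 v) =
      (((d : ℝ) + 2) * v ^ 2) * ∑ i, ∑ j, (B i j) ^ 2 := by
    rw [integral_finsetSum _ fun i _ => integrable_finsetSum _ fun j _ =>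
      integrable_finsetSum _ fun k _ => integrable_finsetSum _ fun l _ => hint i j k l,
      Finset.mul_sum]
    refine Finset.sum_congr rfl fun i _ => ?_
    rw [integral_finsetSum _ fun j _ =>
      integrable_finsetSum _ fun k _ => integrable_finsetSum _ fun l _ => hint i j k l,
      Finset.mul_sum]
    refine Finset.sum_congr rfl fun j _ => ?_
    rw [integral_finsetSum _ fun k _ => integrable_finsetSum _ fun l _ => hint i j k l]
    have : ∀ k, ∫ x : Fin d → ℝ, ∑ l, (B i j * B i k) * (x j * x k * x l ^ 2)
      ∂(Measure.pi fun _ : Fin d => gaussianReal 0 v) =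
        if j = k then (B i j * B i k) * (((d : ℝ) + 2) * v ^ 2) else 0 := by
      intro k
      rw [integral_finsetSum _ fun l _ => hint i j k l]
      simp_rw [integral_const_mul, mono_integral]
      by_cases h : j = k
      · simp only [h, if_true]
        rw [← Finset.mul_sum, Finset.sum_add_distrib]
        simp
        ring_nf
        simp
      · simp [h]
    simp_rw [this]
    simp
    ring
  rw [key, hvr]
  refine mul_le_mul_of_nonneg_right ?_ (by positivity)
  rw [div_pow, one_pow, mul_one_div, div_le_div_iff₀ (by positivity) (by positivity)]
  nlinarith
end

section
/- Consider the linear subspace denoising model with 2 ≤ d ≤ n. For every W ∈ ℝ^{n×n}, E‖(W − W*)(x xᵀ + x zᵀ + z xᵀ + z zᵀ)‖_F² ≤ 4 ‖W − W*‖_F² · (2/d + σ_z²/d + σ_z²/n + 2 σ_z⁴/n). -/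
open MeasureTheory ProbabilityTheory Matrix

lemma gm_aux (v : ℝ) (p p' : ℝ → ℝ) (hp : ∀ t, HasDerivAt p (p' t) t) :
    deriv (fun t => p t * Real.exp (v * t ^ 2 / 2)) =
      fun t => (p' t + v * t * p t) * Real.exp (v * t ^ 2 / 2) := by
  funext t
  have h2 : HasDerivAt (fun t : ℝ => v * t ^ 2 / 2) (v * t) t := by
    have := ((hasDerivAt_pow 2 t).const_mul v).div_const 2
    refine this.congr_deriv ?_
    simp; ring
  have := ((hp t).mul h2.exp).deriv
  rw [show (fun t => p t * Real.exp (v * t ^ 2 / 2)) = p * fun t => Real.exp (v * t ^ 2 / 2) from rfl, this]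
  ring

lemma gm_all (v : NNReal) :
    (∫ x, x ^ 1 ∂(gaussianReal 0 v)) = 0 ∧ (∫ x, x ^ 2 ∂(gaussianReal 0 v)) = v ∧
    (∫ x, x ^ 3 ∂(gaussianReal 0 v)) = 0 ∧ (∫ x, x ^ 4 ∂(gaussianReal 0 v)) = 3 * (v:ℝ) ^ 2 := by
  have key : ∀ k, ∫ x, x ^ k ∂(gaussianReal 0 v) =
      iteratedDeriv k (fun t : ℝ => 1 * Real.exp (v * t ^ 2 / 2)) 0 := by
    intro k
    have := iteratedDeriv_mgf_zero (X := fun x : ℝ => x) (μ := gaussianReal 0 v) (by simp) k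
    rw [mgf_fun_id_gaussianReal] at this
    simp only [zero_mul, zero_add] at this
    simp only [one_mul]
    rw [this]; rfl
  have d1 := gm_aux v (fun _ => 1) (fun _ => 0) (fun t => hasDerivAt_const t 1)
  have d2 := gm_aux v (fun t => 0 + v * t * 1) (fun t => v) (fun t => by
    simpa using (hasDerivAt_id t).const_mul (v : ℝ))
  have d3 := gm_aux v (fun t => v + v * t * (0 + v * t * 1)) (fun t => 2 * v ^ 2 * t) (fun t => by
    have := ((hasDerivAt_pow 2 t).const_mul ((v : ℝ) ^ 2)).const_add (v : ℝ)
    refine (this.congr_deriv (g' := 2 * v ^ 2 * t) (by simp; ring)).congr_of_eventuallyEq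
      (Filter.Eventually.of_forall fun s => ?_)
    simp; ring)
  have d4 := gm_aux v (fun t => 2 * v ^ 2 * t + v * t * (v + v * t * (0 + v * t * 1)))
    (fun t => 3 * v ^ 2 + 3 * v ^ 3 * t ^ 2) (fun t => by
    have := ((hasDerivAt_id t).const_mul (3 * (v : ℝ) ^ 2)).add
      ((hasDerivAt_pow 3 t).const_mul ((v : ℝ) ^ 3))
    refine (this.congr_deriv (g' := 3 * v ^ 2 + 3 * v ^ 3 * t ^ 2)
      (by simp; ring)).congr_of_eventuallyEq (Filter.Eventually.of_forall fun s => ?_)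
    simp; ring)
  simp only [key, iteratedDeriv_succ, iteratedDeriv_zero, d1, d2, d3, d4]
  simp

lemma mono_int {m : ℕ} (v : NNReal) (a : Fin m → ℕ) :
    Integrable (fun x : Fin m → ℝ => ∏ i, x i ^ a i) (Measure.pi fun _ => gaussianReal 0 v) := by
  apply Integrable.fintype_prod (f := fun i (x : ℝ) => x ^ a i)
  intro i
  exact integrable_pow_of_mem_interior_integrableExpSet (X := fun x : ℝ => x) (by simp) (a i)

lemma mono_val {m : ℕ} (v : NNReal) (a : Fin m → ℕ) :
    ∫ x : Fin m → ℝ, ∏ i, x i ^ a i ∂(Measure.pi fun _ => gaussianReal 0 v) =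
      ∏ i, ∫ t, t ^ a i ∂(gaussianReal 0 v) :=
  integral_fintype_prod_eq_prod (μ := fun _ => gaussianReal 0 v) (fun i (x : ℝ) => x ^ a i)

def ex2 {m : ℕ} (j k : Fin m) : Fin m → ℕ := fun i => (if i = j then 1 else 0) + (if i = k then 1 else 0)

lemma ex2_prod {m : ℕ} (j k : Fin m) (x : Fin m → ℝ) : ∏ i, x i ^ ex2 j k i = x j * x k := by
  simp only [ex2, pow_add, Finset.prod_mul_distrib]
  simp [pow_ite]

def ex4 {m : ℕ} (j k l : Fin m) : Fin m → ℕ := fun i => ex2 j k i + (if i = l then 2 else 0)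

lemma ex4_prod {m : ℕ} (j k l : Fin m) (x : Fin m → ℝ) :
    ∏ i, x i ^ ex4 j k l i = x j * x k * x l ^ 2 := by
  simp only [ex4, pow_add, Finset.prod_mul_distrib, ex2_prod]
  simp [pow_ite]

lemma int2 {m : ℕ} (v : NNReal) (j k : Fin m) :
    Integrable (fun x : Fin m → ℝ => x j * x k) (Measure.pi fun _ => gaussianReal 0 v) := by
  simpa only [ex2_prod] using mono_int v (ex2 j k)

lemma int4 {m : ℕ} (v : NNReal) (j k l : Fin m) :
    Integrable (fun x : Fin m → ℝ => x j * x k * x l ^ 2) (Measure.pi fun _ => gaussianReal 0 v) := by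
  simpa only [ex4_prod] using mono_int v (ex4 j k l)

lemma val2 {m : ℕ} (v : NNReal) (j k : Fin m) :
    ∫ x : Fin m → ℝ, x j * x k ∂(Measure.pi fun _ => gaussianReal 0 v) =
      if j = k then (v : ℝ) else 0 := by
  obtain ⟨h1, h2, h3, h4⟩ := gm_all v
  simp only [← ex2_prod, mono_val]
  split_ifs with h
  · subst h
    rw [Finset.prod_eq_single j]
    · simp [ex2, h2]
    · intro b _ hb; simp [ex2, hb]
    · simp
  · apply Finset.prod_eq_zero (Finset.mem_univ j)
    simpa [ex2, h] using h1

lemma val4 {m : ℕ} (v : NNReal) (j k l : Fin m) :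
    ∫ x : Fin m → ℝ, x j * x k * x l ^ 2 ∂(Measure.pi fun _ => gaussianReal 0 v) =
      if j = k then (v : ℝ) ^ 2 + (if j = l then 2 * (v : ℝ) ^ 2 else 0) else 0 := by
  obtain ⟨h1, h2, h3, h4⟩ := gm_all v
  simp only [← ex4_prod, mono_val]
  split_ifs with h hl
  · subst h; subst hl
    rw [Finset.prod_eq_single j]
    · simp [ex4, ex2, h4]; ring
    · intro b _ hb; simp [ex4, ex2, hb]
    · simp
  · subst h
    rw [← Finset.prod_subset (Finset.subset_univ {j, l}), Finset.prod_pair hl]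
    · simp [ex4, ex2, h2, hl, Ne.symm hl]; ring
    · intro b _ hb
      simp at hb
      simp [ex4, ex2, hb]
  · apply Finset.prod_eq_zero (Finset.mem_univ j)
    by_cases hl : j = l
    · simpa [ex4, ex2, h, ← hl] using h3
    · simpa [ex4, ex2, h, hl] using h1

def fro {k m : ℕ} (B : Matrix (Fin k) (Fin m) ℝ) : ℝ := ∑ i, ∑ j, B i j ^ 2
def nsq {m : ℕ} (x : Fin m → ℝ) : ℝ := ∑ i, x i ^ 2

lemma nsq_expand {k m : ℕ} (B : Matrix (Fin k) (Fin m) ℝ) (x : Fin m → ℝ) :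
    nsq (B *ᵥ x) = ∑ i, ∑ j, ∑ l, B i j * B i l * (x j * x l) := by
  simp only [nsq, mulVec, dotProduct, sq, Finset.sum_mul_sum]
  refine Finset.sum_congr rfl fun i _ => Finset.sum_congr rfl fun j _ => Finset.sum_congr rfl fun l _ => ?_
  ring

lemma nsq4_expand {k m : ℕ} (B : Matrix (Fin k) (Fin m) ℝ) (x : Fin m → ℝ) :
    nsq (B *ᵥ x) * nsq x = ∑ i, ∑ j, ∑ l, ∑ p, B i j * B i l * (x j * x l * x p ^ 2) := by
  rw [nsq_expand]
  simp only [Finset.sum_mul]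
  refine Finset.sum_congr rfl fun i _ => Finset.sum_congr rfl fun j _ =>
    Finset.sum_congr rfl fun l _ => ?_
  rw [nsq, Finset.mul_sum]
  refine Finset.sum_congr rfl fun p _ => ?_
  ring

lemma Q2_int {k m : ℕ} (v : NNReal) (B : Matrix (Fin k) (Fin m) ℝ) :
    Integrable (fun x => nsq (B *ᵥ x)) (Measure.pi fun _ => gaussianReal 0 v) := by
  simp only [nsq_expand]
  exact integrable_finsetSum _ fun i _ => integrable_finsetSum _ fun j _ =>
    integrable_finsetSum _ fun l _ => (int2 v j l).const_mul _

lemma Q4_int {k m : ℕ} (v : NNReal) (B : Matrix (Fin k) (Fin m) ℝ) :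
    Integrable (fun x => nsq (B *ᵥ x) * nsq x) (Measure.pi fun _ => gaussianReal 0 v) := by
  simp only [nsq4_expand]
  exact integrable_finsetSum _ fun i _ => integrable_finsetSum _ fun j _ =>
    integrable_finsetSum _ fun l _ => integrable_finsetSum _ fun p _ => (int4 v j l p).const_mul _

lemma Q2_val {k m : ℕ} (v : NNReal) (B : Matrix (Fin k) (Fin m) ℝ) :
    ∫ x, nsq (B *ᵥ x) ∂(Measure.pi fun _ => gaussianReal 0 v) = v * fro B := by
  simp only [nsq_expand]
  rw [integral_finsetSum _ fun i _ => integrable_finsetSum _ fun j _ =>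
    integrable_finsetSum _ fun l _ => (int2 v j l).const_mul _]
  simp only [fro, Finset.mul_sum]
  refine Finset.sum_congr rfl fun i _ => ?_
  rw [integral_finsetSum _ fun j _ =>
    integrable_finsetSum _ fun l _ => (int2 v j l).const_mul _]
  refine Finset.sum_congr rfl fun j _ => ?_
  rw [integral_finsetSum _ fun l _ => (int2 v j l).const_mul _]
  simp only [integral_const_mul, val2]
  simp; ring

lemma Q4_val {k m : ℕ} (v : NNReal) (B : Matrix (Fin k) (Fin m) ℝ) :
    ∫ x, nsq (B *ᵥ x) * nsq x ∂(Measure.pi fun _ => gaussianReal 0 v) =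
      (m + 2) * v ^ 2 * fro B := by
  simp only [nsq4_expand]
  rw [integral_finsetSum _ fun i _ => integrable_finsetSum _ fun j _ =>
    integrable_finsetSum _ fun l _ => integrable_finsetSum _ fun p _ => (int4 v j l p).const_mul _]
  simp only [fro, Finset.mul_sum]
  refine Finset.sum_congr rfl fun i _ => ?_
  rw [integral_finsetSum _ fun j _ =>
    integrable_finsetSum _ fun l _ => integrable_finsetSum _ fun p _ => (int4 v j l p).const_mul _]
  refine Finset.sum_congr rfl fun j _ => ?_
  rw [integral_finsetSum _ fun l _ =>
    integrable_finsetSum _ fun p _ => (int4 v j l p).const_mul _]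
  have : ∀ l, ∫ x : Fin m → ℝ, ∑ p, B i j * B i l * (x j * x l * x p ^ 2)
      ∂(Measure.pi fun _ => gaussianReal 0 v) =
      if j = l then (m + 2) * v ^ 2 * B i j ^ 2 else 0 := by
    intro l
    rw [integral_finsetSum _ fun p _ => (int4 v j l p).const_mul _]
    simp only [integral_const_mul, val4]
    split_ifs with h
    · subst h
      simp [mul_add, Finset.sum_add_distrib]; ring
    · simp
  simp [this]

lemma nsq_int {m : ℕ} (v : NNReal) :
    Integrable (fun x : Fin m → ℝ => nsq x) (Measure.pi fun _ => gaussianReal 0 v) := by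
  simpa using Q2_int v (1 : Matrix (Fin m) (Fin m) ℝ)

lemma nsq_val {m : ℕ} (v : NNReal) :
    ∫ x : Fin m → ℝ, nsq x ∂(Measure.pi fun _ => gaussianReal 0 v) = m * v := by
  have := Q2_val v (1 : Matrix (Fin m) (Fin m) ℝ)
  simp only [one_mulVec] at this
  rw [this, fro]
  simp [Matrix.one_apply, mul_comm]

lemma nsq_dot {m : ℕ} (x : Fin m → ℝ) : nsq x = x ⬝ᵥ x := by simp [nsq, dotProduct, sq]

lemma nsq_U {n d : ℕ} (U : Matrix (Fin n) (Fin d) ℝ) (hU : Uᵀ * U = 1) (c : Fin d → ℝ) :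
    nsq (U *ᵥ c) = nsq c := by
  rw [nsq_dot, nsq_dot, dotProduct_mulVec, vecMul_mulVec, hU, vecMul_one]

lemma nsq_nonneg {m : ℕ} (x : Fin m → ℝ) : 0 ≤ nsq x := Finset.sum_nonneg fun _ _ => sq_nonneg _

lemma fro_U {n d : ℕ} (U : Matrix (Fin n) (Fin d) ℝ) (hU : Uᵀ * U = 1)
    (A : Matrix (Fin n) (Fin n) ℝ) : fro (A * U) ≤ fro A := by
  refine Finset.sum_le_sum fun i _ => ?_
  change nsq ((A * U) i) ≤ nsq (A i)
  have h1 : (A * U) i = A i ᵥ* U := rfl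
  set a := A i
  rw [h1]
  have h := nsq_nonneg (a - U *ᵥ (a ᵥ* U))
  have h2 : nsq (a - U *ᵥ (a ᵥ* U)) = nsq a - 2 * (a ⬝ᵥ U *ᵥ (a ᵥ* U)) + nsq (U *ᵥ (a ᵥ* U)) := by
    simp only [nsq, dotProduct, Finset.mul_sum, ← Finset.sum_sub_distrib, ← Finset.sum_add_distrib]
    refine Finset.sum_congr rfl fun i _ => ?_
    simp only [Pi.sub_apply]; ring
  rw [h2, nsq_U U hU, dotProduct_mulVec, ← nsq_dot] at h
  linarith

lemma nsq_add_le {m : ℕ} (x y : Fin m → ℝ) : nsq (x + y) ≤ 2 * (nsq x + nsq y) := by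
  simp only [nsq, ← Finset.sum_add_distrib, Finset.mul_sum]
  refine Finset.sum_le_sum fun i _ => ?_
  simp only [Pi.add_apply]; nlinarith [sq_nonneg (x i - y i)]

lemma integrand_eq {n : ℕ} (A : Matrix (Fin n) (Fin n) ℝ) (x z : Fin n → ℝ) :
    ∑ i, ∑ j, ((A * (vecMulVec x x + vecMulVec x z + vecMulVec z x + vecMulVec z z)) i j) ^ 2 =
      nsq (A *ᵥ x + A *ᵥ z) * nsq (x + z) := by
  have : vecMulVec x x + vecMulVec x z + vecMulVec z x + vecMulVec z z = vecMulVec (x + z) (x + z) := by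
    ext i j; simp [vecMulVec_apply]; ring
  rw [this, mul_vecMulVec, ← mulVec_add]
  simp [nsq, vecMulVec_apply, Finset.sum_mul_sum, mul_pow]

theorem stmt17 (n d : ℕ) (hd : 2 ≤ d) (hdn : d ≤ n)
    {Ω : Type*} [MeasurableSpace Ω] (μ : Measure Ω) [IsProbabilityMeasure μ]
    (σz σe : ℝ) (hσz : 0 ≤ σz) (hσe : 0 ≤ σe)
    (U : Matrix (Fin n) (Fin d) ℝ) (hU : Uᵀ * U = 1)
    (c : Ω → Fin d → ℝ) (z : Ω → Fin n → ℝ)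
    (hc : Measurable c) (hz : Measurable z)
    (hlaw : Measure.map (fun ω => (c ω, z ω)) μ =
      (Measure.pi fun _ : Fin d => gaussianReal 0 ((1 / (d : ℝ)).toNNReal)).prod
        (Measure.pi fun _ : Fin n => gaussianReal 0 ((σz ^ 2 / (n : ℝ)).toNNReal)))
    (Wstar : Matrix (Fin n) (Fin n) ℝ)
    (hWstar : Wstar = (1 / (1 + σz ^ 2 * d / n)) • (U * Uᵀ))
    (W : Matrix (Fin n) (Fin n) ℝ) :
    ∫ ω, ∑ i, ∑ j,
        (((W - Wstar) *
          (vecMulVec (U.mulVec (c ω)) (U.mulVec (c ω)) +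
            vecMulVec (U.mulVec (c ω)) (z ω) +
            vecMulVec (z ω) (U.mulVec (c ω)) +
            vecMulVec (z ω) (z ω))) i j) ^ 2 ∂μ ≤
      4 * (∑ i, ∑ j, ((W - Wstar) i j) ^ 2) *
        (2 / (d : ℝ) + σz ^ 2 / (d : ℝ) + σz ^ 2 / (n : ℝ) + 2 * σz ^ 4 / (n : ℝ)) := by
  clear hWstar
  change _ ≤ 4 * fro (W - Wstar) * _
  generalize W - Wstar = A
  simp only [integrand_eq]
  have hd2 : (2 : ℝ) ≤ d := by exact_mod_cast hd
  have hn2 : (2 : ℝ) ≤ n := by exact_mod_cast hd.trans hdn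
  have hd0 : (0 : ℝ) < d := by linarith
  have hn0 : (0 : ℝ) < n := by linarith
  set s : NNReal := (1 / (d : ℝ)).toNNReal with hs
  set v : NNReal := (σz ^ 2 / (n : ℝ)).toNNReal with hv
  have hs' : (s : ℝ) = 1 / d := Real.coe_toNNReal _ (by positivity)
  have hv' : (v : ℝ) = σz ^ 2 / n := Real.coe_toNNReal _ (by positivity)
  clear_value s v
  set P := (Measure.pi fun _ : Fin d => gaussianReal 0 s) with hP
  set Q := (Measure.pi fun _ : Fin n => gaussianReal 0 v) with hQ
  let F : (Fin d → ℝ) × (Fin n → ℝ) → ℝ := fun p =>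
    4 * (nsq ((A * U) *ᵥ p.1) * nsq p.1 * 1 + nsq ((A * U) *ᵥ p.1) * nsq p.2
      + nsq p.1 * nsq (A *ᵥ p.2) + 1 * (nsq (A *ᵥ p.2) * nsq p.2))
  have i1 : Integrable (fun p : (Fin d → ℝ) × (Fin n → ℝ) => nsq ((A * U) *ᵥ p.1) * nsq p.1 * 1)
    (P.prod Q) := (Q4_int s (A * U)).mul_prod (integrable_const (1 : ℝ))
  have i2 : Integrable (fun p : (Fin d → ℝ) × (Fin n → ℝ) => nsq ((A * U) *ᵥ p.1) * nsq p.2)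
    (P.prod Q) := (Q2_int s (A * U)).mul_prod (nsq_int v)
  have i3 : Integrable (fun p : (Fin d → ℝ) × (Fin n → ℝ) => nsq p.1 * nsq (A *ᵥ p.2))
    (P.prod Q) := (nsq_int s).mul_prod (Q2_int v A)
  have i4 : Integrable (fun p : (Fin d → ℝ) × (Fin n → ℝ) => 1 * (nsq (A *ᵥ p.2) * nsq p.2))
    (P.prod Q) := (integrable_const (1 : ℝ)).mul_prod (Q4_int v A)
  have hFi : Integrable F (P.prod Q) := (((i1.add i2).add i3).add i4).const_mul 4
  have hFv : ∫ p, F p ∂(P.prod Q) = 4 * ((d + 2) * s ^ 2 * fro (A * U) +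
      s * fro (A * U) * (n * v) + d * s * (v * fro A) + (n + 2) * v ^ 2 * fro A) := by
    simp only [F]
    rw [integral_const_mul, integral_add (by exact (i1.add i2).add i3) i4,
      integral_add (by exact i1.add i2) i3, integral_add i1 i2,
      integral_prod_mul (fun x => nsq ((A * U) *ᵥ x) * nsq x) (fun _ => (1 : ℝ)),
      integral_prod_mul (fun x => nsq ((A * U) *ᵥ x)) (fun x => nsq x),
      integral_prod_mul (fun x => nsq x) (fun x => nsq (A *ᵥ x)),
      integral_prod_mul (fun _ => (1 : ℝ)) (fun x => nsq (A *ᵥ x) * nsq x)]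
    rw [hP, hQ, Q4_val, Q4_val, Q2_val, Q2_val, nsq_val, nsq_val]
    simp
  have hm : AEMeasurable (fun ω => (c ω, z ω)) μ := (hc.prodMk hz).aemeasurable
  have hle : ∫ ω, nsq (A *ᵥ (U *ᵥ c ω) + A *ᵥ z ω) * nsq (U *ᵥ c ω + z ω) ∂μ ≤
      ∫ ω, F (c ω, z ω) ∂μ := by
    apply integral_mono_of_nonneg
    · exact Filter.Eventually.of_forall fun ω => mul_nonneg (nsq_nonneg _) (nsq_nonneg _)
    · rw [← hlaw] at hFi
      exact hFi.comp_aemeasurable hm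
    · refine Filter.Eventually.of_forall fun ω => ?_
      have h1 := nsq_add_le (A *ᵥ (U *ᵥ c ω)) (A *ᵥ z ω)
      have h2 := nsq_add_le (U *ᵥ c ω) (z ω)
      have h3 := mul_le_mul h1 h2 (nsq_nonneg _)
        (by linarith [nsq_nonneg (A *ᵥ (U *ᵥ c ω)), nsq_nonneg (A *ᵥ z ω)])
      refine h3.trans (le_of_eq ?_)
      simp only [F, nsq_U U hU, mulVec_mulVec]
      ring
  rw [← integral_map hm (by rw [hlaw]; exact hFi.aestronglyMeasurable), hlaw, hFv] at hle
  refine hle.trans ?_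
  have hf := fro_U U hU A
  have hf0 : 0 ≤ fro A := Finset.sum_nonneg fun _ _ => nsq_nonneg (A _)
  rw [hs', hv', mul_assoc 4 (fro A)]
  refine mul_le_mul_of_nonneg_left ?_ (by norm_num : (0 : ℝ) ≤ 4)
  have e1 : (d + 2) * (1 / (d : ℝ)) ^ 2 * fro (A * U) ≤ 2 / d * fro A := by
    refine mul_le_mul ?_ hf (Finset.sum_nonneg fun _ _ => nsq_nonneg ((A * U) _)) (by positivity)
    rw [one_div, inv_pow, ← div_eq_mul_inv, div_le_div_iff₀ (by positivity) hd0]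
    nlinarith
  have e2 : 1 / (d : ℝ) * fro (A * U) * (n * (σz ^ 2 / n)) ≤ σz ^ 2 / d * fro A := by
    have : 1 / (d : ℝ) * fro (A * U) * (n * (σz ^ 2 / n)) = σz ^ 2 / d * fro (A * U) := by
      field_simp
    rw [this]
    exact mul_le_mul_of_nonneg_left hf (by positivity)
  have e3 : (d : ℝ) * (1 / d) * (σz ^ 2 / n * fro A) = σz ^ 2 / n * fro A := by
    field_simp
  have e4 : (n + 2) * (σz ^ 2 / (n : ℝ)) ^ 2 * fro A ≤ 2 * σz ^ 4 / n * fro A := by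
    refine mul_le_mul_of_nonneg_right ?_ hf0
    have : 2 * σz ^ 4 / n - (n + 2) * (σz ^ 2 / (n : ℝ)) ^ 2 = (n - 2) * σz ^ 4 / n ^ 2 := by
      field_simp; ring
    have h : 0 ≤ (n - 2) * σz ^ 4 / (n : ℝ) ^ 2 := by
      have : (0 : ℝ) ≤ n - 2 := by linarith
      positivity
    linarith
  linarith
end

section
/- Consider the linear subspace denoising model with 2 ≤ d ≤ n and σ_z² ≤ 1. Then E‖(W* − I)(x xᵀ + x zᵀ) + W*(z xᵀ + z zᵀ)‖_F² ≤ 24 (d/n) σ_z². -/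
open MeasureTheory ProbabilityTheory Matrix

/-- The fourth moment of a random variable with a centered Gaussian mgf. -/
lemma fourth_moment {Ω : Type*} [MeasurableSpace Ω] (μ : Measure Ω) [IsProbabilityMeasure μ]
    (X : Ω → ℝ) (v : ℝ) (h : ∀ t, mgf X μ t = Real.exp (v * t ^ 2 / 2)) :
    Integrable (fun ω => X ω ^ 4) μ ∧ ∫ ω, X ω ^ 4 ∂μ = 3 * v ^ 2 := by
  have hset : integrableExpSet X μ = Set.univ := by
    ext t
    simp only [Set.mem_univ, iff_true]
    by_contra hcon
    have h0 : mgf X μ t = 0 := mgf_undef hcon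
    rw [h t] at h0
    exact (Real.exp_pos _).ne' h0
  have hmem : (0 : ℝ) ∈ interior (integrableExpSet X μ) := by simp [hset]
  refine ⟨integrable_pow_of_mem_interior_integrableExpSet hmem 4, ?_⟩
  have h4 := iteratedDeriv_mgf_zero hmem 4
  have hfun : mgf X μ = fun t => Real.exp (v * t ^ 2 / 2) := funext h
  have e : ∀ t : ℝ, HasDerivAt (fun t => Real.exp (v * t ^ 2 / 2))
      (v * t * Real.exp (v * t ^ 2 / 2)) t := by
    intro t
    have := ((((hasDerivAt_id t).pow 2).const_mul v).div_const 2).exp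
    refine this.congr_deriv ?_
    simp; ring
  have d1 : deriv (fun t => Real.exp (v * t ^ 2 / 2)) =
      fun t => v * t * Real.exp (v * t ^ 2 / 2) := funext fun t => (e t).deriv
  have d2 : deriv (fun t => v * t * Real.exp (v * t ^ 2 / 2)) =
      fun t => (v + v ^ 2 * t ^ 2) * Real.exp (v * t ^ 2 / 2) := by
    funext t
    have := (((hasDerivAt_id t).const_mul v).mul (e t)).deriv
    refine Eq.trans this ?_
    simp; ring
  have d3 : deriv (fun t => (v + v ^ 2 * t ^ 2) * Real.exp (v * t ^ 2 / 2)) =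
      fun t => (3 * v ^ 2 * t + v ^ 3 * t ^ 3) * Real.exp (v * t ^ 2 / 2) := by
    funext t
    have := (((((hasDerivAt_id t).pow 2).const_mul (v ^ 2)).const_add v).mul (e t)).deriv
    refine Eq.trans this ?_
    simp; ring
  have d4 : deriv (fun t => (3 * v ^ 2 * t + v ^ 3 * t ^ 3) * Real.exp (v * t ^ 2 / 2)) 0 =
      3 * v ^ 2 := by
    have := ((((hasDerivAt_id (0 : ℝ)).const_mul (3 * v ^ 2)).add
      (((hasDerivAt_id (0 : ℝ)).pow 3).const_mul (v ^ 3))).mul (e 0)).deriv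
    refine Eq.trans this ?_
    simp
  rw [hfun] at h4
  simp only [iteratedDeriv_succ, iteratedDeriv_zero, d1, d2, d3, d4] at h4
  rw [h4]
  rfl

/-- Linear functionals of a Gaussian vector have a Gaussian mgf. -/
lemma mgf_linear {Ω : Type*} [MeasurableSpace Ω] (μ : Measure Ω) {n : ℕ} (v : ℝ) (hv : 0 ≤ v)
    (z : Ω → Fin n → ℝ) (hz : Measurable z)
    (hlaw : μ.map z = Measure.pi fun _ : Fin n => gaussianReal 0 v.toNNReal)
    (u : Fin n → ℝ) (hu : ∑ i, u i ^ 2 = 1) (t : ℝ) :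
    mgf (fun ω => ∑ i, u i * z ω i) μ t = Real.exp (v * t ^ 2 / 2) := by
  have h1 : mgf (fun ω => ∑ i, u i * z ω i) μ t =
      ∫ y, ∏ i, Real.exp (t * u i * y i) ∂(μ.map z) := by
    rw [integral_map hz.aemeasurable]
    · simp only [mgf, ← Real.exp_sum, Finset.mul_sum, mul_assoc]
    · exact (by fun_prop : Measurable _).aestronglyMeasurable
  rw [h1, hlaw, integral_fintype_prod_eq_prod (𝕜 := ℝ) (fun i (x : ℝ) => Real.exp (t * u i * x))]
  have h2 : ∀ i, ∫ x, Real.exp (t * u i * x) ∂(gaussianReal 0 v.toNNReal) =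
      Real.exp (v * (t * u i) ^ 2 / 2) := by
    intro i
    have := mgf_gaussianReal (p := gaussianReal 0 v.toNNReal) (X := id) (μ := 0)
      (v := v.toNNReal) (by simp) (t * u i)
    simpa [mgf, hv] using this
  simp only [h2, ← Real.exp_sum]
  congr 1
  calc ∑ i, v * (t * u i) ^ 2 / 2 = ∑ i, (v * t ^ 2 / 2) * u i ^ 2 := by
        congr 1; ext i; ring
    _ = _ := by rw [← Finset.mul_sum, hu, mul_one]

lemma sq_mul_sq {Ω : Type*} [MeasurableSpace Ω] (μ : Measure Ω)
    (X Y : Ω → ℝ) (hX : Measurable X) (hY : Measurable Y) (p q : ℝ) (hp : 0 ≤ p) (hq : 0 ≤ q)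
    (h1 : Integrable (fun ω => X ω ^ 4) μ ∧ ∫ ω, X ω ^ 4 ∂μ = 3 * p ^ 2)
    (h2 : Integrable (fun ω => Y ω ^ 4) μ ∧ ∫ ω, Y ω ^ 4 ∂μ = 3 * q ^ 2) :
    Integrable (fun ω => X ω ^ 2 * Y ω ^ 2) μ ∧ ∫ ω, X ω ^ 2 * Y ω ^ 2 ∂μ ≤ 3 * p * q := by
  have hi : Integrable (fun ω => X ω ^ 2 * Y ω ^ 2) μ := by
    refine (h1.1.add h2.1).mono' (by fun_prop : Measurable _).aestronglyMeasurable ?_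
    refine Filter.Eventually.of_forall fun ω => ?_
    rw [Real.norm_of_nonneg (by positivity)]
    simp only [Pi.add_apply]
    nlinarith [sq_nonneg (X ω ^ 2 - Y ω ^ 2), sq_nonneg (X ω ^ 2 + Y ω ^ 2)]
  refine ⟨hi, ?_⟩
  have key : ∀ t : ℝ, 0 ≤ (3 * p ^ 2) * (t * t) +
      (-2 * ∫ ω, X ω ^ 2 * Y ω ^ 2 ∂μ) * t + 3 * q ^ 2 := by
    intro t
    have h0 : 0 ≤ ∫ ω, (t ^ 2 * X ω ^ 4 + (-2 * t) * (X ω ^ 2 * Y ω ^ 2) + Y ω ^ 4) ∂μ :=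
      integral_nonneg fun ω => by
        have := sq_nonneg (t * X ω ^ 2 - Y ω ^ 2)
        simp only [Pi.zero_apply]
        nlinarith
    have hs : Integrable (fun ω => t ^ 2 * X ω ^ 4 + (-2 * t) * (X ω ^ 2 * Y ω ^ 2)) μ :=
      (h1.1.const_mul _).add (hi.const_mul _)
    rw [integral_add hs h2.1,
      integral_add (h1.1.const_mul _) (hi.const_mul _), integral_const_mul, integral_const_mul,
      h1.2, h2.2] at h0
    linarith
  have hd := discrim_le_zero key
  unfold discrim at hd
  refine abs_le_of_sq_le_sq' ?_ (by positivity) |>.2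
  nlinarith

lemma norm_mulVec {n d : ℕ} (U : Matrix (Fin n) (Fin d) ℝ) (hU : Uᵀ * U = 1) (g : Fin d → ℝ) :
    ∑ i, (U.mulVec g) i ^ 2 = ∑ k, g k ^ 2 := by
  have h : (U.mulVec g) ⬝ᵥ (U.mulVec g) = g ⬝ᵥ g := by
    rw [Matrix.dotProduct_mulVec, ← Matrix.mulVec_transpose, Matrix.mulVec_mulVec, hU,
      Matrix.one_mulVec]
  simpa [dotProduct, sq] using h

/-- Pointwise domination of the integrand. -/
lemma pointwise_bound {n d : ℕ} (U : Matrix (Fin n) (Fin d) ℝ) (hU : Uᵀ * U = 1)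
    (a : ℝ) (W : Matrix (Fin n) (Fin n) ℝ) (hW : W = a • (U * Uᵀ))
    (c : Fin d → ℝ) (z : Fin n → ℝ) :
    ∑ i, ∑ j, (((W - 1) *
            (vecMulVec (U.mulVec c) (U.mulVec c) + vecMulVec (U.mulVec c) z) +
          W * (vecMulVec z (U.mulVec c) + vecMulVec z z)) i j) ^ 2 ≤
      4 * (((1 - a) ^ 2 * ∑ k, ∑ i, c k ^ 2 * c i ^ 2 +
          (1 - a) ^ 2 * ∑ k, ∑ j, c k ^ 2 * z j ^ 2) +
        (a ^ 2 * ∑ k, ∑ i, (∑ l, U l k * z l) ^ 2 * c i ^ 2 +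
          a ^ 2 * ∑ k, ∑ j, (∑ l, U l k * z l) ^ 2 * z j ^ 2)) := by
  subst hW
  set w : Fin d → ℝ := fun k => ∑ l, U l k * z l with hw
  have hwU : Uᵀ.mulVec z = w := by
    ext k; simp [hw, mulVec, dotProduct]
  set g : Fin d → ℝ := fun k => -(1 - a) * c k + a * w k with hg
  have hgU : U.mulVec g = (-(1 - a)) • U.mulVec c + a • U.mulVec w := by
    rw [← Matrix.mulVec_smul, ← Matrix.mulVec_smul, ← Matrix.mulVec_add]
    rfl
  have hM : (((a • (U * Uᵀ)) - 1) *
            (vecMulVec (U.mulVec c) (U.mulVec c) + vecMulVec (U.mulVec c) z) +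
          (a • (U * Uᵀ)) * (vecMulVec z (U.mulVec c) + vecMulVec z z)) =
      vecMulVec (U.mulVec g) (U.mulVec c + z) := by
    have e1 : ((a • (U * Uᵀ)) - 1).mulVec (U.mulVec c) = (-(1 - a)) • U.mulVec c := by
      rw [Matrix.sub_mulVec, Matrix.smul_mulVec, Matrix.mulVec_mulVec, Matrix.mul_assoc, hU,
        Matrix.mul_one, Matrix.one_mulVec]
      ext i; simp; ring
    have e2 : (a • (U * Uᵀ)).mulVec z = a • U.mulVec w := by
      rw [Matrix.smul_mulVec, ← Matrix.mulVec_mulVec, hwU]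
    simp only [Matrix.mul_add, Matrix.mul_vecMulVec, e1, e2, hgU]
    ext i j
    simp [vecMulVec_apply]; ring
  rw [hM]
  have e : ∑ i, ∑ j, (vecMulVec (U.mulVec g) (U.mulVec c + z) i j) ^ 2 =
      (∑ k, g k ^ 2) * ∑ j, (U.mulVec c + z) j ^ 2 := by
    rw [← norm_mulVec U hU g, Finset.sum_mul_sum]
    simp only [vecMulVec_apply, mul_pow]
  rw [e]
  have b1 : ∑ k, g k ^ 2 ≤ 2 * ((1 - a) ^ 2 * ∑ k, c k ^ 2 + a ^ 2 * ∑ k, w k ^ 2) := by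
    rw [Finset.mul_sum, Finset.mul_sum, ← Finset.sum_add_distrib, Finset.mul_sum]
    refine Finset.sum_le_sum fun k _ => ?_
    simp only [hg]
    nlinarith [sq_nonneg ((1 - a) * c k + a * w k)]
  have b2 : ∑ j, (U.mulVec c + z) j ^ 2 ≤ 2 * (∑ k, c k ^ 2 + ∑ j, z j ^ 2) := by
    rw [← norm_mulVec U hU c, ← Finset.sum_add_distrib, Finset.mul_sum]
    refine Finset.sum_le_sum fun k _ => ?_
    simp only [Pi.add_apply]
    nlinarith [sq_nonneg (U.mulVec c k - z k)]
  refine (mul_le_mul b1 b2 (by positivity) (by positivity)).trans (le_of_eq ?_)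
  simp only [← Finset.sum_mul_sum]
  ring

lemma double_sum_bound {Ω : Type*} [MeasurableSpace Ω] (μ : Measure Ω) {m n : ℕ}
    (F : Fin m → Fin n → Ω → ℝ) (B : ℝ)
    (h : ∀ k j, Integrable (F k j) μ ∧ ∫ ω, F k j ω ∂μ ≤ B) :
    Integrable (fun ω => ∑ k, ∑ j, F k j ω) μ ∧ ∫ ω, ∑ k, ∑ j, F k j ω ∂μ ≤ m * n * B := by
  have hi : ∀ k, Integrable (fun ω => ∑ j, F k j ω) μ := fun k =>
    integrable_finsetSum _ fun j _ => (h k j).1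
  refine ⟨integrable_finsetSum _ fun k _ => hi k, ?_⟩
  rw [integral_finsetSum _ fun k _ => hi k]
  calc ∑ k, ∫ ω, ∑ j, F k j ω ∂μ = ∑ k, ∑ j, ∫ ω, F k j ω ∂μ := by
        refine Finset.sum_congr rfl fun k _ => ?_
        rw [integral_finsetSum _ fun j _ => (h k j).1]
    _ ≤ ∑ k : Fin m, ∑ j : Fin n, B :=
        Finset.sum_le_sum fun k _ => Finset.sum_le_sum fun j _ => (h k j).2
    _ = m * n * B := by simp; ring

/-- In the linear subspace denoising model with `2 ≤ d ≤ n` and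
`σ_z² ≤ 1`, `E‖(W* - I)(x xᵀ + x zᵀ) + W*(z xᵀ + z zᵀ)‖_F² ≤ 24 (d/n) σ_z²`,
where `x = U c` and `W* = (1/(1 + σ_z² d/n)) U Uᵀ`. -/
theorem stmt19 (n d : ℕ) (hd : 2 ≤ d) (hdn : d ≤ n)
    {Ω : Type*} [MeasurableSpace Ω] (μ : Measure Ω) [IsProbabilityMeasure μ]
    (σz σe : ℝ) (hσz : 0 ≤ σz) (hσz1 : σz ^ 2 ≤ 1) (hσe : 0 ≤ σe)
    (U : Matrix (Fin n) (Fin d) ℝ) (hU : Uᵀ * U = 1)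
    (c : Ω → Fin d → ℝ) (z : Ω → Fin n → ℝ)
    (hc : Measurable c) (hz : Measurable z)
    (hlaw : Measure.map (fun ω => (c ω, z ω)) μ =
      (Measure.pi fun _ : Fin d => gaussianReal 0 ((1 / (d : ℝ)).toNNReal)).prod
        (Measure.pi fun _ : Fin n => gaussianReal 0 ((σz ^ 2 / (n : ℝ)).toNNReal)))
    (Wstar : Matrix (Fin n) (Fin n) ℝ)
    (hWstar : Wstar = (1 / (1 + σz ^ 2 * d / n)) • (U * Uᵀ)) :
    ∫ ω, ∑ i, ∑ j,
        (((Wstar - 1) *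
            (vecMulVec (U.mulVec (c ω)) (U.mulVec (c ω)) +
              vecMulVec (U.mulVec (c ω)) (z ω)) +
          Wstar *
            (vecMulVec (z ω) (U.mulVec (c ω)) +
              vecMulVec (z ω) (z ω))) i j) ^ 2 ∂μ ≤
      24 * ((d : ℝ) / (n : ℝ)) * σz ^ 2 := by
  subst hWstar
  have hd0 : (0 : ℝ) < d := by exact_mod_cast (by omega : 0 < d)
  have hn0 : (0 : ℝ) < n := by exact_mod_cast (by omega : 0 < n)
  have hlc : μ.map c = Measure.pi fun _ : Fin d => gaussianReal 0 ((1 / (d : ℝ)).toNNReal) := by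
    have := congrArg (Measure.map Prod.fst) hlaw
    rw [Measure.map_map measurable_fst (hc.prodMk hz), Measure.map_fst_prod] at this
    simpa [Function.comp_def] using this
  have hlz : μ.map z = Measure.pi fun _ : Fin n => gaussianReal 0 ((σz ^ 2 / (n : ℝ)).toNNReal) := by
    have := congrArg (Measure.map Prod.snd) hlaw
    rw [Measure.map_map measurable_snd (hc.prodMk hz), Measure.map_snd_prod] at this
    simpa [Function.comp_def] using this
  set p : ℝ := 1 / (d : ℝ) with hp
  set v : ℝ := σz ^ 2 / (n : ℝ) with hv
  have hp0 : 0 ≤ p := by positivity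
  have hv0 : 0 ≤ v := by positivity
  have mc : ∀ k, Measurable fun ω => c ω k := fun k => (measurable_pi_apply k).comp hc
  have mz : ∀ k, Measurable fun ω => z ω k := fun k => (measurable_pi_apply k).comp hz
  have mw : ∀ k, Measurable fun ω => ∑ l, U l k * z ω l := fun k =>
    Finset.measurable_fun_sum _ fun l _ => (mz l).const_mul _
  have Hc : ∀ k, Integrable (fun ω => c ω k ^ 4) μ ∧ ∫ ω, c ω k ^ 4 ∂μ = 3 * p ^ 2 := by
    intro k
    have := fourth_moment μ _ p (mgf_linear μ p hp0 c hc hlc (Pi.single k 1)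
      (by simp [Pi.single_apply]))
    simpa [Pi.single_apply] using this
  have Hz : ∀ k, Integrable (fun ω => z ω k ^ 4) μ ∧ ∫ ω, z ω k ^ 4 ∂μ = 3 * v ^ 2 := by
    intro k
    have := fourth_moment μ _ v (mgf_linear μ v hv0 z hz hlz (Pi.single k 1)
      (by simp [Pi.single_apply]))
    simpa [Pi.single_apply] using this
  have Hw : ∀ k, Integrable (fun ω => (∑ l, U l k * z ω l) ^ 4) μ ∧
      ∫ ω, (∑ l, U l k * z ω l) ^ 4 ∂μ = 3 * v ^ 2 := by
    intro k
    refine fourth_moment μ _ v (mgf_linear μ v hv0 z hz hlz (fun l => U l k) ?_)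
    have := congrFun (congrFun hU k) k
    simpa [Matrix.mul_apply, sq] using this
  have Scc := double_sum_bound μ (fun k i ω => c ω k ^ 2 * c ω i ^ 2) _
    fun k i => sq_mul_sq μ _ _ (mc k) (mc i) p p hp0 hp0 (Hc k) (Hc i)
  have Scz := double_sum_bound μ (fun k i ω => c ω k ^ 2 * z ω i ^ 2) _
    fun k i => sq_mul_sq μ _ _ (mc k) (mz i) p v hp0 hv0 (Hc k) (Hz i)
  have Swc := double_sum_bound μ (fun k i ω => (∑ l, U l k * z ω l) ^ 2 * c ω i ^ 2) _
    fun k i => sq_mul_sq μ _ _ (mw k) (mc i) v p hv0 hp0 (Hw k) (Hc i)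
  have Swz := double_sum_bound μ (fun k i ω => (∑ l, U l k * z ω l) ^ 2 * z ω i ^ 2) _
    fun k i => sq_mul_sq μ _ _ (mw k) (mz i) v v hv0 hv0 (Hw k) (Hz i)
  set s : ℝ := σz ^ 2 * d / n with hs
  have hs0 : 0 ≤ s := by positivity
  set a : ℝ := 1 / (1 + s) with ha
  have I1 := (Scc.1.const_mul ((1 - a) ^ 2)).add (Scz.1.const_mul ((1 - a) ^ 2))
  have I2 := (Swc.1.const_mul (a ^ 2)).add (Swz.1.const_mul (a ^ 2))
  refine (integral_mono_of_nonneg (Filter.Eventually.of_forall fun ω => by positivity)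
    ((I1.add I2).const_mul 4)
    (Filter.Eventually.of_forall fun ω => pointwise_bound U hU a _ rfl (c ω) (z ω))).trans ?_
  rw [integral_const_mul, integral_add' I1 I2,
    integral_add' (Scc.1.const_mul _) (Scz.1.const_mul _),
    integral_add' (Swc.1.const_mul _) (Swz.1.const_mul _)]
  simp only [integral_const_mul]
  have E1 : (d : ℝ) * d * (3 * p * p) = 3 := by rw [hp]; field_simp
  have E2 : (d : ℝ) * n * (3 * p * v) = 3 * σz ^ 2 := by rw [hp, hv]; field_simp
  have E3 : (d : ℝ) * d * (3 * v * p) = 3 * s := by rw [hp, hv, hs]; field_simp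
  have E4 : (d : ℝ) * n * (3 * v * v) = 3 * s * σz ^ 2 := by rw [hv, hs]; field_simp
  have F1 := Scc.2
  have F2 := Scz.2
  have F3 := Swc.2
  have F4 := Swz.2
  rw [E1] at F1
  rw [E2] at F2
  rw [E3] at F3
  rw [E4] at F4
  have G1 := mul_le_mul_of_nonneg_left F1 (sq_nonneg (1 - a))
  have G2 := mul_le_mul_of_nonneg_left (F2.trans (by linarith : _ ≤ (3 : ℝ))) (sq_nonneg (1 - a))
  have G3 := mul_le_mul_of_nonneg_left F3 (sq_nonneg a)
  have G4 := mul_le_mul_of_nonneg_left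
    (F4.trans (by nlinarith : _ ≤ 3 * s)) (sq_nonneg a)
  have fin1 : (1 - a) ^ 2 + a ^ 2 * s ≤ s := by
    have h1 : (1 - a) ^ 2 + a ^ 2 * s = s / (1 + s) := by
      rw [ha]; field_simp; ring
    rw [h1]
    exact div_le_self hs0 (by linarith)
  have fin2 : 24 * ((d : ℝ) / n) * σz ^ 2 = 24 * s := by rw [hs]; ring
  rw [fin2]
  linarith
end
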